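/- Let K be an algebraically closed field with a nontrivial non-archimedean valuation v: K* → ℝ, valuation ring R, and residue field k of characteristic different from 2 and 3. Let E be an elliptic curve over K with a minimal integral Weierstrass model W having multiplicative reduction, i.e. v(Δ) > 0 and v(c₄) = 0, and let (x₀, y₀) ∈ k² be the unique singular point of the reduced curve Ē over k. Let n > 1 be an integer not divisible by the characteristic of k. Then there exists a point P = (x, y) ∈ E(K) of order n such that x, y ∈ R and the reductions of x and y modulo the maximal ideal are x₀ and y₀; i.e., P reduces to the singular point of Ē. -/

import Mathlib

open WeierstrassCurve

/-- A Weierstrass model is *integral* with respect to the additive valuation `v` if all of its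
coefficients have nonnegative valuation, i.e. lie in the valuation ring `R`. -/
def IsIntegralModel {K : Type*} [Field K] (v : AddValuation K (WithTop ℝ))
    (W : WeierstrassCurve K) : Prop :=
  0 ≤ v W.a₁ ∧ 0 ≤ v W.a₂ ∧ 0 ≤ v W.a₃ ∧ 0 ≤ v W.a₄ ∧ 0 ≤ v W.a₆

/-- `W` is a Weierstrass model of (the elliptic curve defined by) `E` if it is obtained from `E`
by an admissible change of variables `x = u²x + r`, `y = u³y + u²sx + t`. -/
def IsModelOf {K : Type*} [Field K] (E W : WeierstrassCurve K) : Prop :=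
  ∃ C : VariableChange K, W = C • E

/-- `W` is a *minimal integral Weierstrass model* of `E`: it is an integral model of `E` whose
discriminant has minimal valuation among all integral models of `E`. -/
def IsMinimalModel {K : Type*} [Field K] (v : AddValuation K (WithTop ℝ))
    (E W : WeierstrassCurve K) : Prop :=
  IsModelOf E W ∧ IsIntegralModel v W ∧
    ∀ W' : WeierstrassCurve K, IsModelOf E W' → IsIntegralModel v W' → v W.Δ ≤ v W'.Δ

/-!
The homogeneous coordinates of `x(P + Q)` and `x(P - Q)` are, as an unordered pair, given by
quadratic forms in the symmetric functions of those of `x(P)` and `x(Q)`, with coefficients in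
`ℤ[b₂, b₄, b₆, b₈]`. Translate the node to `x = 0`, so that `b₄`, `b₆`, `b₈` reduce to `0` and `b₂`
to a unit. The forms then show that the points with `x(P)⁻¹` integral, those of nonsingular
reduction, are a subgroup `S`, and that `x(nP) = Aₙ(x(P)) / Bₙ(x(P))` with `Aₙ` monic of degree
`n²`, `Bₙ` of smaller degree, `Aₙ` reducing to `X ^ n²` and `Bₙ` to a nonzero polynomial divisible
by `X` when `1 < n`. Choose `Q ∈ S` for which `c = x(nQ)` is integral. Since `Aₙ - c Bₙ` is monic
and its constant term is in the maximal ideal, it has a root in the maximal ideal: a point `P ∉ S`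
with `nP = ± nQ`. Thus `P ∓ Q ∉ S` is killed by `n`. For prime `n` this point has order `n`,
divisibility of the group yields prime powers, and sums over coprime orders yield all `n`.
-/

section SymmetricSquare

variable {R S : Type*} [CommRing R] [CommRing S]

/-- The coefficients of the product of two binary linear forms: on homogeneous coordinates, the
map `ℙ¹ × ℙ¹ → Sym² ℙ¹ ≃ ℙ²`. It specialises to `WeierstrassCurve.Affine.Point.sym2x` on
representatives of `x`-coordinates. -/
def sym2 (p q : Fin 2 → R) : Fin 3 → R :=
  ![p 0 * q 0, p 0 * q 1 + p 1 * q 0, p 1 * q 1]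

/-- The values of the forms `WeierstrassCurve.addSubMap` at a coordinate vector. -/
noncomputable def addSub (W : WeierstrassCurve R) (z : Fin 3 → R) (i : Fin 3) : R :=
  (W.addSubMap i).eval z

variable (W : WeierstrassCurve R) (z : Fin 3 → R)

lemma addSub_apply_zero :
    addSub W z 0 = z 0 ^ 2 - W.b₄ * z 0 * z 2 - W.b₆ * z 1 * z 2 - W.b₈ * z 2 ^ 2 := by
  simp [addSub, addSubMap]

lemma addSub_apply_one :
    addSub W z 1 = 2 * z 1 * z 0 + W.b₂ * z 0 * z 2 + W.b₄ * z 1 * z 2 + W.b₆ * z 2 ^ 2 := by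
  simp [addSub, addSubMap]

lemma addSub_apply_two : addSub W z 2 = z 1 ^ 2 - 4 * z 0 * z 2 := by
  simp [addSub, addSubMap]

lemma sym2_comp (f : R →+* S) (p q : Fin 2 → R) : sym2 (f ∘ p) (f ∘ q) = f ∘ sym2 p q := by
  ext i
  fin_cases i <;> simp [sym2]

lemma addSub_map (f : R →+* S) : addSub (W.map f) (f ∘ z) = f ∘ addSub W z := by
  ext i
  fin_cases i <;> simp [addSub_apply_zero, addSub_apply_one, addSub_apply_two, map_ofNat]

lemma sym2_smul_smul (a b : R) (p q : Fin 2 → R) :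
    sym2 (a • p) (b • q) = (a * b) • sym2 p q := by
  ext i
  fin_cases i <;>
    simp only [Fin.zero_eta, Fin.mk_one, Fin.reduceFinMk, sym2, Matrix.cons_val, Pi.smul_apply,
      smul_eq_mul] <;>
    ring

lemma addSub_smul (a : R) : addSub W (a • z) = a ^ 2 • addSub W z := by
  ext i
  fin_cases i <;>
    simp only [Fin.zero_eta, Fin.mk_one, Fin.reduceFinMk, addSub_apply_zero, addSub_apply_one,
      addSub_apply_two, Pi.smul_apply, smul_eq_mul] <;>
    ring

lemma sym2_left_injective [IsDomain R] {q : Fin 2 → R} (hq : q ≠ 0) :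
    Function.Injective fun p ↦ sym2 p q := by
  intro p p' h
  have h₀ : p 0 * q 0 = p' 0 * q 0 := congrFun h 0
  have h₁ : p 0 * q 1 + p 1 * q 0 = p' 0 * q 1 + p' 1 * q 0 := congrFun h 1
  have h₂ : p 1 * q 1 = p' 1 * q 1 := congrFun h 2
  by_cases hq₁ : q 1 = 0
  · have hq₀ : q 0 ≠ 0 := fun hq₀ ↦ hq (by ext i; fin_cases i <;> assumption)
    have hp₀ := mul_right_cancel₀ hq₀ h₀
    have hp₁ : p 1 = p' 1 := mul_right_cancel₀ hq₀ (by simpa [hp₀] using h₁)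
    ext i
    fin_cases i <;> assumption
  · have hp₁ := mul_right_cancel₀ hq₁ h₂
    have hp₀ : p 0 = p' 0 := mul_right_cancel₀ hq₁ (by simpa [hp₁] using h₁)
    ext i
    fin_cases i <;> assumption

end SymmetricSquare

section AdditionLaw

open WeierstrassCurve.Affine

section CommRing

variable {R : Type*} [CommRing R] {W : WeierstrassCurve R} {x y : R}

lemma addSub_sym2x_zero (P : W.toAffine.Point) :
    addSub W ((0 : W.toAffine.Point).sym2x P) = P.sym2x P := by
  ext i
  fin_cases i <;>
    simp only [Fin.zero_eta, Fin.mk_one, Fin.reduceFinMk, addSub_apply_zero, addSub_apply_one,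
      addSub_apply_two, Point.sym2x, Point.xRep_zero, Matrix.cons_val] <;>
    ring

lemma addSub_self_zero (h : W.toAffine.Equation x y) :
    addSub W ![x * x, x + x, 1] 0 =
      (3 * x ^ 2 + 2 * W.a₂ * x + W.a₄ - W.a₁ * y) ^ 2
        + W.a₁ * (3 * x ^ 2 + 2 * W.a₂ * x + W.a₄ - W.a₁ * y) * (y - W.toAffine.negY x y)
        - (W.a₂ + 2 * x) * (y - W.toAffine.negY x y) ^ 2 := by
  rw [equation_iff] at h
  rw [addSub_apply_zero]
  simp only [Matrix.cons_val, b₄, b₆, b₈, negY]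
  linear_combination (8 * x + 4 * W.a₂ + W.a₁ ^ 2) * h

lemma addSub_self_one (h : W.toAffine.Equation x y) :
    addSub W ![x * x, x + x, 1] 1 = (y - W.toAffine.negY x y) ^ 2 := by
  rw [equation_iff] at h
  rw [addSub_apply_one]
  simp only [Matrix.cons_val, b₂, b₄, b₆, negY]
  linear_combination -4 * h

lemma addSub_self_two : addSub W ![x * x, x + x, 1] 2 = 0 := by
  simp only [addSub_apply_two, Matrix.cons_val]
  ring

end CommRing

variable {K : Type*} [Field K] [DecidableEq K] {W : WeierstrassCurve K}

section DistinctX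

variable {x₁ y₁ x₂ y₂ : K}

lemma slope_mul_sub (hx : x₁ ≠ x₂) : W.toAffine.slope x₁ x₂ y₁ y₂ * (x₁ - x₂) = y₁ - y₂ := by
  rw [slope_of_X_ne hx, div_mul_cancel₀ _ (sub_ne_zero.2 hx)]

lemma slope_negY_mul_sub (hx : x₁ ≠ x₂) :
    W.toAffine.slope x₁ x₂ y₁ (W.toAffine.negY x₂ y₂) * (x₁ - x₂) =
      y₁ + y₂ + W.a₁ * x₂ + W.a₃ := by
  rw [slope_mul_sub hx, negY]
  ring

lemma slope_mul_slope_negY_mul_sub (hx : x₁ ≠ x₂) (h₁ : W.toAffine.Equation x₁ y₁)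
    (h₂ : W.toAffine.Equation x₂ y₂) :
    W.toAffine.slope x₁ x₂ y₁ y₂ * W.toAffine.slope x₁ x₂ y₁ (W.toAffine.negY x₂ y₂) * (x₁ - x₂) =
      x₁ ^ 2 + x₁ * x₂ + x₂ ^ 2 + W.a₂ * (x₁ + x₂) + W.a₄ - W.a₁ * y₁ := by
  rw [equation_iff] at h₁ h₂
  apply mul_right_cancel₀ (sub_ne_zero.2 hx)
  have slope_add := slope_mul_sub (W := W) (y₁ := y₁) (y₂ := y₂) hx
  have slope_sub := slope_negY_mul_sub (W := W) (y₁ := y₁) (y₂ := y₂) hx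
  linear_combination (y₁ + y₂ + W.a₁ * x₂ + W.a₃) * slope_add
    + W.toAffine.slope x₁ x₂ y₁ y₂ * (x₁ - x₂) * slope_sub + h₁ - h₂

lemma addSub_eq_addX_mul_addX (hx : x₁ ≠ x₂) (h₁ : W.toAffine.Equation x₁ y₁)
    (h₂ : W.toAffine.Equation x₂ y₂) :
    addSub W ![x₁ * x₂, x₁ + x₂, 1] 0 = (x₁ - x₂) ^ 2 *
      (W.toAffine.addX x₁ x₂ (W.toAffine.slope x₁ x₂ y₁ y₂) *
        W.toAffine.addX x₁ x₂ (W.toAffine.slope x₁ x₂ y₁ (W.toAffine.negY x₂ y₂))) := by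
  have slope_add := slope_mul_sub (W := W) (y₁ := y₁) (y₂ := y₂) hx
  have slope_sub := slope_negY_mul_sub (W := W) (y₁ := y₁) (y₂ := y₂) hx
  have slope_mul := slope_mul_slope_negY_mul_sub hx h₁ h₂
  generalize W.toAffine.slope x₁ x₂ y₁ y₂ = l at *
  generalize W.toAffine.slope x₁ x₂ y₁ (W.toAffine.negY x₂ y₂) = l' at *
  rw [equation_iff] at h₁ h₂
  have expand : (x₁ - x₂) ^ 2 * (W.toAffine.addX x₁ x₂ l * W.toAffine.addX x₁ x₂ l') =
      (l * l' * (x₁ - x₂)) ^ 2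
      + W.a₁ * (l * l' * (x₁ - x₂)) * (l * (x₁ - x₂) + l' * (x₁ - x₂))
      + W.a₁ ^ 2 * (x₁ - x₂) * (l * l' * (x₁ - x₂))
      - (W.a₂ + x₁ + x₂) * ((l * (x₁ - x₂)) ^ 2 + (l' * (x₁ - x₂)) ^ 2
        + W.a₁ * (x₁ - x₂) * (l * (x₁ - x₂) + l' * (x₁ - x₂)))
      + (W.a₂ + x₁ + x₂) ^ 2 * (x₁ - x₂) ^ 2 := by
    rw [addX, addX]
    ring
  rw [expand, slope_mul, slope_add, slope_sub, addSub_apply_zero]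
  simp only [Matrix.cons_val, b₄, b₆, b₈]
  linear_combination (W.a₁ ^ 2 + 2 * (W.a₂ + x₁ + x₂)) * h₁ + 2 * (W.a₂ + x₁ + x₂) * h₂

lemma addSub_eq_addX_add_addX (hx : x₁ ≠ x₂) (h₁ : W.toAffine.Equation x₁ y₁)
    (h₂ : W.toAffine.Equation x₂ y₂) :
    addSub W ![x₁ * x₂, x₁ + x₂, 1] 1 = (x₁ - x₂) ^ 2 *
      (W.toAffine.addX x₁ x₂ (W.toAffine.slope x₁ x₂ y₁ y₂) +
        W.toAffine.addX x₁ x₂ (W.toAffine.slope x₁ x₂ y₁ (W.toAffine.negY x₂ y₂))) := by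
  have slope_add := slope_mul_sub (W := W) (y₁ := y₁) (y₂ := y₂) hx
  have slope_sub := slope_negY_mul_sub (W := W) (y₁ := y₁) (y₂ := y₂) hx
  generalize W.toAffine.slope x₁ x₂ y₁ y₂ = l at *
  generalize W.toAffine.slope x₁ x₂ y₁ (W.toAffine.negY x₂ y₂) = l' at *
  rw [equation_iff] at h₁ h₂
  have expand : (x₁ - x₂) ^ 2 * (W.toAffine.addX x₁ x₂ l + W.toAffine.addX x₁ x₂ l') =
      (l * (x₁ - x₂)) ^ 2 + (l' * (x₁ - x₂)) ^ 2
      + W.a₁ * (x₁ - x₂) * (l * (x₁ - x₂) + l' * (x₁ - x₂))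
      - 2 * (W.a₂ + x₁ + x₂) * (x₁ - x₂) ^ 2 := by
    rw [addX, addX]
    ring
  rw [expand, slope_add, slope_sub, addSub_apply_one]
  simp only [Matrix.cons_val, b₂, b₄, b₆]
  linear_combination -2 * h₁ - 2 * h₂

lemma addSub_sym2x_of_X_ne (hx : x₁ ≠ x₂) (h₁ : W.toAffine.Nonsingular x₁ y₁)
    (h₂ : W.toAffine.Nonsingular x₂ y₂) :
    addSub W ((Point.some x₁ y₁ h₁).sym2x (.some x₂ y₂ h₂)) = (x₁ - x₂) ^ 2 •
      (Point.some x₁ y₁ h₁ + .some x₂ y₂ h₂).sym2x (.some x₁ y₁ h₁ + -.some x₂ y₂ h₂) := by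
  rw [Point.neg_some, Point.add_of_X_ne hx, Point.add_of_X_ne hx, Point.sym2x_some_some,
    Point.sym2x_some_some]
  ext i
  fin_cases i
  · exact addSub_eq_addX_mul_addX hx h₁.1 h₂.1
  · exact addSub_eq_addX_add_addX hx h₁.1 h₂.1
  · simp only [Fin.reduceFinMk, addSub_apply_two, Matrix.cons_val, Pi.smul_apply, smul_eq_mul]
    ring

end DistinctX

lemma addSub_sym2x_self {x y : K} (h : W.toAffine.Nonsingular x y) :
    ∃ κ : K, κ ≠ 0 ∧ addSub W ((Point.some x y h).sym2x (.some x y h)) =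
      κ • (Point.some x y h + .some x y h).sym2x 0 := by
  rw [Point.sym2x_some_some]
  by_cases hy : y = W.toAffine.negY x y
  · rw [Point.add_self_of_Y_eq hy, Point.sym2x_zero_zero]
    refine ⟨(3 * x ^ 2 + 2 * W.a₂ * x + W.a₄ - W.a₁ * y) ^ 2, pow_ne_zero 2 fun h₀ ↦ ?_, ?_⟩
    · rcases ((nonsingular_iff ..).1 h).2 with hX | hY
      · exact hX (by linear_combination -h₀)
      · exact hY hy
    · have hy' := sub_eq_zero.2 hy
      ext i
      fin_cases i
      · simpa [hy', -negY] using addSub_self_zero h.1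
      · simpa [hy', -negY] using addSub_self_one h.1
      · simpa using addSub_self_two
  · have hy' : y - W.toAffine.negY x y ≠ 0 := sub_ne_zero.2 hy
    rw [Point.add_self_of_Y_ne hy, Point.sym2x_some_zero, slope_of_Y_ne rfl hy]
    refine ⟨(y - W.toAffine.negY x y) ^ 2, pow_ne_zero 2 hy', ?_⟩
    ext i
    fin_cases i
    · refine (addSub_self_zero h.1).trans ?_
      generalize y - W.toAffine.negY x y = Y at *
      simp only [Fin.zero_eta, addX, Pi.smul_apply, smul_eq_mul, Matrix.cons_val]
      field_simp
      ring
    · simpa using addSub_self_one h.1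
    · simpa using addSub_self_two

theorem addSub_sym2x (P Q : W.toAffine.Point) :
    ∃ κ : K, κ ≠ 0 ∧ addSub W (P.sym2x Q) = κ • (P + Q).sym2x (P - Q) := by
  rcases P with _ | ⟨x₁, y₁, h₁⟩
  · refine ⟨1, one_ne_zero, ?_⟩
    rw [← Point.zero_def, zero_add, zero_sub, Point.sym2x_neg_right, one_smul, addSub_sym2x_zero]
  rcases Q with _ | ⟨x₂, y₂, h₂⟩
  · refine ⟨1, one_ne_zero, ?_⟩
    rw [← Point.zero_def, add_zero, sub_zero, Point.sym2x_comm _ 0, one_smul, addSub_sym2x_zero]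
  by_cases hx : x₁ = x₂
  · rcases Point.X_eq_iff.1 hx with hPQ | hPQ
    · rw [hPQ, sub_self]
      exact addSub_sym2x_self h₂
    · rw [hPQ, neg_add_cancel, ← neg_add', Point.sym2x_neg_left, Point.sym2x_neg_right,
        Point.sym2x_comm 0]
      exact addSub_sym2x_self h₂
  · rw [sub_eq_add_neg]
    exact ⟨_, pow_ne_zero 2 (sub_ne_zero.2 hx), addSub_sym2x_of_X_ne hx h₁ h₂⟩

end AdditionLaw

section AddOrder

variable {G : Type*} [AddCommGroup G] (S : AddSubgroup G)

variable {S} in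
lemma mem_of_coprime_nsmul_mem {a b : ℕ} (hab : a.Coprime b) {P : G} (ha : a • P ∈ S)
    (hb : b • P ∈ S) : P ∈ S := by
  have bezout : a.gcdA b • a • P + a.gcdB b • b • P = P := by
    have := Nat.gcd_eq_gcd_ab a b
    rw [hab.gcd_eq_one, Nat.cast_one] at this
    rw [← natCast_zsmul, ← natCast_zsmul, smul_smul, smul_smul, ← add_smul, mul_comm,
      mul_comm (a.gcdB b), ← this, one_smul]
  rw [← bezout]
  exact S.add_mem (S.zsmul_mem ha _) (S.zsmul_mem hb _)

lemma exists_notMem_addOrderOf_eq_prime_pow {p : ℕ} (hp : p.Prime)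
    (hdiv : ∀ Q : G, ∃ P, p • P = Q) (htors : ∃ P ∉ S, p • P = 0) (k : ℕ) :
    ∃ P ∉ S, addOrderOf P = p ^ (k + 1) := by
  have := Fact.mk hp
  induction k with
  | zero =>
    obtain ⟨P, hPS, hP⟩ := htors
    have hP₀ : P ≠ 0 := fun h ↦ hPS (h ▸ S.zero_mem)
    exact ⟨P, hPS, by rw [zero_add, pow_one, addOrderOf_eq_prime hP hP₀]⟩
  | succ k ih =>
    obtain ⟨Q, hQS, hQ⟩ := ih
    obtain ⟨P, rfl⟩ := hdiv Q
    refine ⟨P, fun hP ↦ hQS (S.nsmul_mem hP p), addOrderOf_eq_prime_pow ?_ ?_⟩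
    · rw [pow_succ, mul_smul]
      refine nsmul_ne_zero_of_lt_addOrderOf (pow_ne_zero k hp.ne_zero) ?_
      rw [hQ]
      exact Nat.pow_lt_pow_succ hp.one_lt
    · rw [pow_succ, mul_smul, ← hQ, addOrderOf_nsmul_eq_zero]

lemma exists_notMem_addOrderOf_eq (hdiv : ∀ p : ℕ, p.Prime → ∀ Q : G, ∃ P, p • P = Q)
    (htors : ∀ p : ℕ, p.Prime → ∃ P ∉ S, p • P = 0) {n : ℕ} (hn : 1 < n) :
    ∃ P ∉ S, addOrderOf P = n := by
  induction n using Nat.recOnPosPrimePosCoprime with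
  | zero => simp at hn
  | one => simp at hn
  | prime_pow p k hp hk =>
    obtain ⟨k, rfl⟩ := Nat.exists_eq_succ_of_ne_zero hk.ne'
    exact exists_notMem_addOrderOf_eq_prime_pow S hp (hdiv p hp) (htors p hp) k
  | coprime a b ha hb hab iha ihb =>
    obtain ⟨P, -, hP⟩ := iha ha
    obtain ⟨Q, hQS, hQ⟩ := ihb hb
    refine ⟨P + Q, fun hPQ ↦ hQS (mem_of_coprime_nsmul_mem hab ?_ ?_), ?_⟩
    · simpa [← hP, smul_add, addOrderOf_nsmul_eq_zero] using S.nsmul_mem hPQ a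
    · simp [← hQ, addOrderOf_nsmul_eq_zero]
    · rw [(AddCommute.all P Q).addOrderOf_add_eq_mul_addOrderOf_of_coprime (hP ▸ hQ ▸ hab), hP, hQ]

end AddOrder

section Kummer

variable {K G : Type*} [Field K] [AddCommGroup G]

/-- A function `ξ` on an abelian group `G` that behaves like the quotient map `E → E/±1 ≃ ℙ¹`
given by homogeneous coordinates of the `x`-coordinate on the Weierstrass curve `W`. Since the
addition law involves `W` only through `b₂, b₄, b₆, b₈`, working with `ξ` makes translations of
the `x`-coordinate available without a change of the group. -/
structure IsKummerMap (W : WeierstrassCurve K) (ξ : G → Fin 2 → K) : Prop where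
  map_zero : ξ 0 = ![1, 0]
  apply_one {P : G} (hP : P ≠ 0) : ξ P 1 = 1
  exists_eq (x : K) : ∃ P, ξ P = ![x, 1]
  eq_or_eq_neg {P Q : G} (h : ξ P = ξ Q) : P = Q ∨ P = -Q
  addSub_eq (P Q : G) :
    ∃ κ : K, κ ≠ 0 ∧ addSub W (sym2 (ξ P) (ξ Q)) = κ • sym2 (ξ (P + Q)) (ξ (P - Q))

namespace IsKummerMap

variable {W : WeierstrassCurve K} {ξ : G → Fin 2 → K}

lemma eq_vec (h : IsKummerMap W ξ) {P : G} (hP : P ≠ 0) : ξ P = ![ξ P 0, 1] := by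
  ext i
  fin_cases i
  · rfl
  · exact h.apply_one hP

lemma apply_ne_zero (h : IsKummerMap W ξ) (P : G) : ξ P ≠ 0 := by
  intro h₀
  by_cases hP : P = 0
  · simpa [hP, h.map_zero] using congrFun h₀ 0
  · simpa [h.apply_one hP] using congrFun h₀ 1

lemma ne_zero_of_eq (h : IsKummerMap W ξ) {P : G} {x : K} (hP : ξ P = ![x, 1]) : P ≠ 0 := by
  rintro rfl
  simpa [h.map_zero] using congrFun hP 1

lemma variableChange (h : IsKummerMap W ξ) (C : VariableChange K) (hu : C.u = 1) :
    IsKummerMap (C • W) fun P ↦ ![ξ P 0 - C.r * ξ P 1, ξ P 1] where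
  map_zero := by simp [h.map_zero]
  apply_one hP := by simpa using h.apply_one hP
  exists_eq x := by
    obtain ⟨P, hP⟩ := h.exists_eq (x + C.r)
    exact ⟨P, by simp [hP]⟩
  eq_or_eq_neg {P Q} hPQ := by
    have h₁ : ξ P 1 = ξ Q 1 := by simpa using congrFun hPQ 1
    have h₀ : ξ P 0 = ξ Q 0 := by simpa [h₁] using congrFun hPQ 0
    refine h.eq_or_eq_neg ?_
    ext i
    fin_cases i <;> assumption
  addSub_eq P Q := by
    obtain ⟨κ, hκ, e⟩ := h.addSub_eq P Q
    have e₀ := congrFun e 0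
    have e₁ := congrFun e 1
    have e₂ := congrFun e 2
    simp only [addSub_apply_zero, addSub_apply_one, addSub_apply_two, sym2, Matrix.cons_val,
      Pi.smul_apply, smul_eq_mul] at e₀ e₁ e₂
    refine ⟨κ, hκ, ?_⟩
    ext i
    fin_cases i <;>
      simp only [Fin.zero_eta, Fin.mk_one, Fin.reduceFinMk, addSub_apply_zero, addSub_apply_one,
        addSub_apply_two, sym2, Matrix.cons_val, Pi.smul_apply, smul_eq_mul, variableChange_b₂,
        variableChange_b₄, variableChange_b₆, variableChange_b₈, hu, inv_one, Units.val_one]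
    · linear_combination e₀ - C.r * e₁ + C.r ^ 2 * e₂
    · linear_combination e₁ - 2 * C.r * e₂
    · linear_combination e₂

end IsKummerMap

open WeierstrassCurve.Affine Polynomial in
lemma exists_equation [IsAlgClosed K] (W : WeierstrassCurve K) (x : K) :
    ∃ y, W.toAffine.Equation x y := by
  obtain ⟨y, hy⟩ := IsAlgClosed.exists_root (C 1 * X ^ 2 + C (W.a₁ * x + W.a₃) * X +
    C (-(x ^ 3 + W.a₂ * x ^ 2 + W.a₄ * x + W.a₆)))
    (by rw [degree_quadratic one_ne_zero]; exact two_ne_zero)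
  have hy' : 1 * y ^ 2 + (W.a₁ * x + W.a₃) * y + -(x ^ 3 + W.a₂ * x ^ 2 + W.a₄ * x + W.a₆) = 0 := by
    simpa only [IsRoot.def, eval_add, eval_mul, eval_C, eval_pow, eval_X] using hy
  exact ⟨y, (equation_iff ..).2 (by linear_combination hy')⟩

open WeierstrassCurve.Affine in
lemma isKummerMap_xRep [IsAlgClosed K] [DecidableEq K] {W : WeierstrassCurve K} (hΔ : W.Δ ≠ 0) :
    IsKummerMap W (Point.xRep (W' := W.toAffine)) where
  map_zero := Point.xRep_zero
  apply_one {P} hP := by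
    rcases P with _ | ⟨x, y, h⟩
    · exact absurd rfl hP
    · simp
  exists_eq x := by
    obtain ⟨y, hy⟩ := exists_equation W x
    exact ⟨.some x y ((equation_iff_nonsingular_of_Δ_ne_zero hΔ).1 hy), Point.xRep_some _⟩
  eq_or_eq_neg := Point.xRep_eq_xRep_iff.1
  addSub_eq := addSub_sym2x

end Kummer

section AbsolutelyIntegrallyClosed

open Polynomial

/-- A ring over which every monic polynomial of nonzero degree has a root. -/
def IsAbsolutelyIntegrallyClosed (O : Type*) [CommRing O] : Prop :=
  ∀ p : O[X], p.Monic → p.degree ≠ 0 → ∃ z, p.IsRoot z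

lemma isAbsolutelyIntegrallyClosed_of_isFractionRing (O K : Type*) [CommRing O] [IsDomain O]
    [IsIntegrallyClosed O] [Field K] [IsAlgClosed K] [Algebra O K] [IsFractionRing O K] :
    IsAbsolutelyIntegrallyClosed O := by
  intro p hp hdeg
  obtain ⟨z, hz⟩ := IsAlgClosed.exists_aeval_eq_zero K p hdeg
  obtain ⟨z, rfl⟩ := IsIntegrallyClosed.isIntegral_iff.1 ⟨p, hp, hz⟩
  exact ⟨z, by rwa [aeval_algebraMap_eq_zero_iff] at hz⟩

namespace IsAbsolutelyIntegrallyClosed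

variable {O : Type*} [CommRing O]

lemma exists_isRoot_mem (hO : IsAbsolutelyIntegrallyClosed O) {I : Ideal O} [hI : I.IsPrime]
    {p : O[X]} (hp : p.Monic) (hp₀ : p.eval 0 ∈ I) : ∃ z ∈ I, p.IsRoot z := by
  have : Nontrivial O := ⟨1, 0, fun h ↦ hI.one_notMem (h ▸ I.zero_mem)⟩
  induction hd : p.natDegree generalizing p with
  | zero =>
    rw [hp.natDegree_eq_zero.1 hd, eval_one] at hp₀
    exact absurd hp₀ hI.one_notMem
  | succ d ih =>
    obtain ⟨r, hr⟩ := hO p hp (by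
      rw [degree_eq_natDegree hp.ne_zero, hd]
      exact_mod_cast d.succ_ne_zero)
    obtain ⟨q, rfl⟩ := dvd_iff_isRoot.2 hr
    have hq : q.Monic := (monic_X_sub_C r).of_mul_monic_left hp
    have hqd : q.natDegree = d := by
      rw [(monic_X_sub_C r).natDegree_mul hq, natDegree_X_sub_C] at hd
      lia
    rw [eval_mul, eval_sub, eval_X, eval_C, zero_sub] at hp₀
    rcases hI.mem_or_mem hp₀ with h | h
    · exact ⟨r, neg_mem_iff.1 h, hr⟩
    · obtain ⟨z, hz, hqz⟩ := ih hq h hqd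
      exact ⟨z, hz, by rw [IsRoot.def, eval_mul, hqz.eq_zero, mul_zero]⟩

lemma isAlgClosed_of_surjective (hO : IsAbsolutelyIntegrallyClosed O) {k : Type*} [Field k]
    {f : O →+* k} (hf : Function.Surjective f) : IsAlgClosed k := by
  refine IsAlgClosed.of_exists_root k fun p hp hirr ↦ ?_
  have : Nontrivial O := f.domain_nontrivial
  obtain ⟨q, rfl, hdeg, hq⟩ := lifts_and_degree_eq_and_monic (map_surjective f hf p) hp
  obtain ⟨z, hz⟩ := hO q hq (hdeg ▸ hirr.degree_pos.ne')
  exact ⟨f z, hz.map⟩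

end IsAbsolutelyIntegrallyClosed

end AbsolutelyIntegrallyClosed

section MultiplicationPolynomials

open Polynomial

section Degree

variable {R : Type*} [CommRing R]

lemma degree_C_mul_lt {p q : R[X]} (h : p.degree < q.degree) (c : R) :
    (C c * p).degree < q.degree := by
  rw [← smul_eq_C_mul]
  exact (degree_smul_le c p).trans_lt h

variable (W : WeierstrassCurve R) {z : Fin 3 → R[X]}

lemma natDegree_addSub_map_C_sub_sq_lt (h₁ : (z 1).natDegree < (z 0).natDegree)
    (h₂ : (z 2).natDegree < (z 0).natDegree) :
    (addSub (W.map C) z 0 - z 0 ^ 2).natDegree < 2 * (z 0).natDegree := by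
  have expand : addSub (W.map C) z 0 - z 0 ^ 2 =
      -(C W.b₄ * z 0 * z 2 + C W.b₆ * z 1 * z 2 + C W.b₈ * z 2 ^ 2) := by
    simp only [addSub_apply_zero, map_b₄, map_b₆, map_b₈]
    ring
  rw [expand, natDegree_neg]
  refine Nat.lt_of_le_sub_one (by lia) ?_
  compute_degree
  lia

lemma natDegree_addSub_map_C_one_lt (h₁ : (z 1).natDegree < (z 0).natDegree)
    (h₂ : (z 2).natDegree < (z 0).natDegree) :
    (addSub (W.map C) z 1).natDegree < 2 * (z 0).natDegree := by
  rw [addSub_apply_one, map_b₂, map_b₄, map_b₆, ← map_ofNat C 2]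
  refine Nat.lt_of_le_sub_one (by lia) ?_
  compute_degree
  lia

lemma monic_addSub_map_C_zero (h₀ : (z 0).Monic) (h₁ : (z 1).natDegree < (z 0).natDegree)
    (h₂ : (z 2).natDegree < (z 0).natDegree) : (addSub (W.map C) z 0).Monic := by
  have hlt := natDegree_addSub_map_C_sub_sq_lt W h₁ h₂
  rw [← h₀.natDegree_pow] at hlt
  rw [← add_sub_cancel (z 0 ^ 2) (addSub (W.map C) z 0)]
  exact (h₀.pow 2).add_of_left (degree_lt_degree hlt)

lemma natDegree_addSub_map_C_zero (h₀ : (z 0).Monic) (h₁ : (z 1).natDegree < (z 0).natDegree)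
    (h₂ : (z 2).natDegree < (z 0).natDegree) :
    (addSub (W.map C) z 0).natDegree = 2 * (z 0).natDegree := by
  have hlt := natDegree_addSub_map_C_sub_sq_lt W h₁ h₂
  rw [← h₀.natDegree_pow] at hlt ⊢
  rw [← add_sub_cancel (z 0 ^ 2) (addSub (W.map C) z 0), natDegree_add_eq_left_of_natDegree_lt hlt]

lemma degree_addSub_map_C_one_lt (h₀ : (z 0).Monic) (h₁ : (z 1).natDegree < (z 0).natDegree)
    (h₂ : (z 2).natDegree < (z 0).natDegree) :
    (addSub (W.map C) z 1).degree < (addSub (W.map C) z 0).degree := by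
  apply degree_lt_degree
  rw [natDegree_addSub_map_C_zero W h₀ h₁ h₂]
  exact natDegree_addSub_map_C_one_lt W h₁ h₂

section Sym2X

variable [Nontrivial R] {u : Fin 2 → R[X]}

lemma natDegree_sym2_X_zero (hu : u 0 ≠ 0) : (sym2 u ![X, 1] 0).natDegree = (u 0).natDegree + 1 :=
  natDegree_mul_X hu

lemma natDegree_sym2_X_one_lt (hu : (u 1).natDegree < (u 0).natDegree) :
    (sym2 u ![X, 1] 1).natDegree < (sym2 u ![X, 1] 0).natDegree := by
  rw [natDegree_sym2_X_zero (ne_zero_of_natDegree_gt hu), Nat.lt_succ_iff]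
  simp only [sym2, Matrix.cons_val]
  compute_degree
  lia

lemma natDegree_sym2_X_two_lt (hu : (u 1).natDegree < (u 0).natDegree) :
    (sym2 u ![X, 1] 2).natDegree < (sym2 u ![X, 1] 0).natDegree := by
  rw [natDegree_sym2_X_zero (ne_zero_of_natDegree_gt hu)]
  simp only [sym2, Matrix.cons_val, mul_one]
  lia

end Sym2X

lemma degree_lt_of_degree_sym2_lt [IsDomain R] {p q : Fin 2 → R[X]}
    (hq : (q 1).degree < (q 0).degree) (h : (sym2 p q 1).degree < (sym2 p q 0).degree) :
    (p 1).degree < (p 0).degree := by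
  simp only [sym2, Matrix.cons_val] at h
  by_contra! hp
  have hp₀ : p 0 ≠ 0 := left_ne_zero_of_mul (ne_zero_of_degree_gt h)
  have hle : (p 0 * q 0).degree ≤ (p 1 * q 0).degree := by
    rw [degree_mul, degree_mul]
    gcongr
  have hlt : (p 0 * q 1).degree < (p 0 * q 0).degree := by
    rw [degree_mul, degree_mul]
    exact WithBot.add_lt_add_left (degree_ne_bot.2 hp₀) hq
  rw [degree_add_eq_right_of_degree_lt (hlt.trans_le hle)] at h
  exact hle.not_gt h

end Degree

section Division

variable {O K : Type*} [CommRing O] [Field K] [IsAlgClosed K] [Algebra O K] [FaithfulSMul O K]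

lemma dvd_of_dvd_mul_of_aeval_ne_zero {a b c : O[X]} (ha : a.Monic)
    (hab : ∀ x : K, aeval x a ≠ 0 ∨ aeval x b ≠ 0) (h : a ∣ c * b) : a ∣ c := by
  have hcop : IsCoprime (a.map (algebraMap O K)) (b.map (algebraMap O K)) := by
    rw [isCoprime_iff_aeval_ne_zero_of_isAlgClosed K K]
    simpa only [aeval_map_algebraMap] using hab
  have hinj := FaithfulSMul.algebraMap_injective O K
  rw [← map_dvd_map _ hinj ha] at h ⊢
  exact hcop.dvd_of_dvd_mul_right (by simpa only [Polynomial.map_mul] using h)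

lemma sym2_divByMonic [IsDomain O] (f : Fin 3 → O[X]) (q : Fin 2 → O[X]) (hq : (q 0).Monic)
    (hq' : ∀ x : K, aeval x (q 0) ≠ 0 ∨ aeval x (q 1) ≠ 0)
    (h : f 0 * q 1 ^ 2 - f 1 * q 0 * q 1 + f 2 * q 0 ^ 2 = 0) :
    sym2 ![f 0 /ₘ q 0, (f 1 - f 0 /ₘ q 0 * q 1) /ₘ q 0] q = f := by
  have mul_divByMonic {g : O[X]} (hg : q 0 ∣ g) : g /ₘ q 0 * q 0 = g := by
    obtain ⟨r, rfl⟩ := hg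
    rw [mul_divByMonic_cancel_left _ hq, mul_comm]
  have h₀ : q 0 ∣ f 0 := by
    refine dvd_of_dvd_mul_of_aeval_ne_zero hq hq' (dvd_of_dvd_mul_of_aeval_ne_zero hq hq' ?_)
    exact ⟨f 1 * q 1 - f 2 * q 0, by linear_combination h⟩
  have e₀ := mul_divByMonic h₀
  generalize f 0 /ₘ q 0 = r₀ at *
  have h₁ : q 0 ∣ f 1 - r₀ * q 1 := by
    refine dvd_of_dvd_mul_of_aeval_ne_zero hq hq' ⟨f 2, mul_left_cancel₀ hq.ne_zero ?_⟩
    linear_combination -h - q 1 ^ 2 * e₀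
  have e₁ := mul_divByMonic h₁
  generalize (f 1 - r₀ * q 1) /ₘ q 0 = r₁ at *
  have e₂ : r₁ * q 1 = f 2 := mul_left_cancel₀ (pow_ne_zero 2 hq.ne_zero)
    (by linear_combination -h - q 1 ^ 2 * e₀ + q 0 * q 1 * e₁)
  ext1 i
  fin_cases i
  · exact e₀
  · simp only [sym2, Matrix.cons_val, Fin.mk_one]
    linear_combination e₁
  · exact e₂

end Division

/-- Homogeneous coordinates `![A, B]` of the map induced by multiplication by `n` on the
`x`-coordinate. They are normalised by `A` being monic, so that both exact divisions in the
three-term recursion coming from `(n + 2)P, nP = (n + 1)P ± P` are divisions by a monic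
polynomial. -/
noncomputable def mulPoly {R : Type*} [CommRing R] (W : WeierstrassCurve R) : ℕ → Fin 2 → R[X]
  | 0 => ![1, 0]
  | 1 => ![X, 1]
  | n + 2 =>
    let f := addSub (W.map C) (sym2 (mulPoly W (n + 1)) ![X, 1])
    let q := mulPoly W n
    ![f 0 /ₘ q 0, (f 1 - f 0 /ₘ q 0 * q 1) /ₘ q 0]

variable {O K G : Type*} [CommRing O] [Field K] [Algebra O K] [AddCommGroup G]

/-- The pair of polynomials `p` represents multiplication by `n` on the group `G` in terms of the
coordinates `ξ`, with the degrees of the multiplication-by-`n` map of an elliptic curve. -/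
structure IsMulPair (ξ : G → Fin 2 → K) (n : ℕ) (p : Fin 2 → O[X]) : Prop where
  monic : (p 0).Monic
  natDegree_eq : (p 0).natDegree = n ^ 2
  degree_lt : (p 1).degree < (p 0).degree
  exists_smul_eq {P : G} (hP : P ≠ 0) :
    ∃ μ : K, μ ≠ 0 ∧ eval₂RingHom (algebraMap O K) (ξ P 0) ∘ p = μ • ξ (n • P)

variable {W : WeierstrassCurve O} {ξ : G → Fin 2 → K}

lemma isMulPair_zero [Nontrivial O] (h : IsKummerMap (W.map (algebraMap O K)) ξ) :
    IsMulPair ξ 0 (mulPoly W 0) where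
  monic := monic_one
  natDegree_eq := natDegree_one
  degree_lt := by simp [mulPoly]
  exists_smul_eq _ := ⟨1, one_ne_zero, by ext i; fin_cases i <;> simp [mulPoly, h.map_zero]⟩

lemma isMulPair_one [Nontrivial O] (h : IsKummerMap (W.map (algebraMap O K)) ξ) :
    IsMulPair ξ 1 (mulPoly W 1) where
  monic := monic_X
  natDegree_eq := natDegree_X
  degree_lt := by simp [mulPoly]
  exists_smul_eq {P} hP := by
    refine ⟨1, one_ne_zero, ?_⟩
    rw [one_smul, one_smul, h.eq_vec hP]
    ext i
    fin_cases i <;> simp [mulPoly]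

lemma addSub_map_C_comp (W : WeierstrassCurve O) (u : Fin 2 → O[X]) (x : K) :
    eval₂RingHom (algebraMap O K) x ∘ addSub (W.map C) (sym2 u ![X, 1]) =
      addSub (W.map (algebraMap O K)) (sym2 (eval₂RingHom (algebraMap O K) x ∘ u) ![x, 1]) := by
  have hX : ![x, 1] = eval₂RingHom (algebraMap O K) x ∘ ![X, 1] := by
    ext i
    fin_cases i <;> simp
  have hW : W.map (algebraMap O K) = (W.map C).map (eval₂RingHom (algebraMap O K) x) := by
    rw [WeierstrassCurve.map_map]
    congr 1
    ext
    simp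
  rw [hX, hW, sym2_comp, addSub_map]

namespace IsMulPair

variable {n : ℕ} {p q u : Fin 2 → O[X]}

lemma addSub_comp (hq : IsMulPair ξ n q) (hu : IsMulPair ξ (n + 1) u)
    (h : IsKummerMap (W.map (algebraMap O K)) ξ) {P : G} (hP : P ≠ 0) :
    ∃ κ : K, κ ≠ 0 ∧
      eval₂RingHom (algebraMap O K) (ξ P 0) ∘ addSub (W.map C) (sym2 u ![X, 1]) =
        sym2 (κ • ξ ((n + 2) • P)) (eval₂RingHom (algebraMap O K) (ξ P 0) ∘ q) := by
  obtain ⟨μ, hμ, eq_u⟩ := hu.exists_smul_eq hP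
  obtain ⟨ν, hν, eq_q⟩ := hq.exists_smul_eq hP
  obtain ⟨κ, hκ, eq_add⟩ := h.addSub_eq ((n + 1) • P) P
  have hadd : (n + 1) • P + P = (n + 2) • P := (succ_nsmul ..).symm
  have hsub : (n + 1) • P - P = n • P := by rw [succ_nsmul, add_sub_cancel_right]
  refine ⟨μ ^ 2 * κ / ν, div_ne_zero (mul_ne_zero (pow_ne_zero 2 hμ) hκ) hν, ?_⟩
  rw [addSub_map_C_comp, eq_u, ← h.eq_vec hP, ← one_smul K (ξ P), sym2_smul_smul, addSub_smul,
    one_smul, eq_add, eq_q, sym2_smul_smul, hadd, hsub, smul_smul, mul_one,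
    div_mul_cancel₀ _ hν]

lemma aeval_ne_zero (hp : IsMulPair ξ n p) (h : IsKummerMap (W.map (algebraMap O K)) ξ) (x : K) :
    aeval x (p 0) ≠ 0 ∨ aeval x (p 1) ≠ 0 := by
  obtain ⟨P, hP⟩ := h.exists_eq x
  obtain ⟨μ, hμ, e⟩ := hp.exists_smul_eq (h.ne_zero_of_eq hP)
  by_contra! hx
  refine smul_ne_zero hμ (h.apply_ne_zero (n • P)) (e ▸ ?_)
  ext i
  fin_cases i <;> simpa [hP, ← aeval_def] using by tauto

lemma addSub_relation [Infinite K] [FaithfulSMul O K] (hq : IsMulPair ξ n q)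
    (hu : IsMulPair ξ (n + 1) u) (h : IsKummerMap (W.map (algebraMap O K)) ξ) {f : Fin 3 → O[X]}
    (hf : f = addSub (W.map C) (sym2 u ![X, 1])) :
    f 0 * q 1 ^ 2 - f 1 * q 0 * q 1 + f 2 * q 0 ^ 2 = 0 := by
  refine map_injective _ (FaithfulSMul.algebraMap_injective O K) (Polynomial.funext fun x ↦ ?_)
  obtain ⟨P, hP⟩ := h.exists_eq x
  obtain ⟨κ, -, e⟩ := hq.addSub_comp hu h (h.ne_zero_of_eq hP)
  rw [← hf, hP] at e
  have e₀ := congrFun e 0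
  have e₁ := congrFun e 1
  have e₂ := congrFun e 2
  simp only [sym2, Function.comp_apply, coe_eval₂RingHom, Matrix.cons_val,
    Pi.smul_apply, smul_eq_mul] at e₀ e₁ e₂
  simp only [eval_map, eval₂_add, eval₂_sub, eval₂_mul, eval₂_pow, eval₂_zero, e₀, e₁, e₂]
  ring

lemma natDegree_lt (hp : IsMulPair ξ n p) (hn : n ≠ 0) : (p 1).natDegree < (p 0).natDegree := by
  by_cases h : p 1 = 0
  · rw [h, natDegree_zero, hp.natDegree_eq]
    positivity
  · exact natDegree_lt_natDegree h hp.degree_lt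

lemma sym2_mulPoly_add_two [IsDomain O] [IsAlgClosed K] [FaithfulSMul O K]
    (h : IsKummerMap (W.map (algebraMap O K)) ξ) (hq : IsMulPair ξ n (mulPoly W n))
    (hu : IsMulPair ξ (n + 1) (mulPoly W (n + 1))) :
    sym2 (mulPoly W (n + 2)) (mulPoly W n) =
      addSub (W.map C) (sym2 (mulPoly W (n + 1)) ![X, 1]) := by
  have : Infinite K := IsAlgClosed.instInfinite
  rw [mulPoly]
  exact sym2_divByMonic _ _ hq.monic (hq.aeval_ne_zero h) (hq.addSub_relation hu h rfl)

lemma of_sym2_eq [IsDomain O] (h : IsKummerMap (W.map (algebraMap O K)) ξ) (hq : IsMulPair ξ n q)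
    (hu : IsMulPair ξ (n + 1) u) (hp : sym2 p q = addSub (W.map C) (sym2 u ![X, 1])) :
    IsMulPair ξ (n + 2) p := by
  have hlt := hu.natDegree_lt n.succ_ne_zero
  have hz₀ : (sym2 u ![X, 1] 0).Monic := hu.monic.mul monic_X
  have hz₁ := natDegree_sym2_X_one_lt hlt
  have hz₂ := natDegree_sym2_X_two_lt hlt
  have hmonic := monic_addSub_map_C_zero W hz₀ hz₁ hz₂
  have hdeg := natDegree_addSub_map_C_zero W hz₀ hz₁ hz₂
  have hdeg_lt := degree_addSub_map_C_one_lt W hz₀ hz₁ hz₂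
  rw [← hp] at hmonic hdeg hdeg_lt
  rw [natDegree_sym2_X_zero hu.monic.ne_zero] at hdeg
  have hp₀ : (p 0).Monic := hq.monic.of_mul_monic_right hmonic
  refine ⟨hp₀, ?_, degree_lt_of_degree_sym2_lt hq.degree_lt hdeg_lt, fun {P} hP ↦ ?_⟩
  · have : (p 0).natDegree + (q 0).natDegree = 2 * ((u 0).natDegree + 1) := by
      rw [← hdeg, ← hp₀.natDegree_mul hq.monic]
      rfl
    rw [hq.natDegree_eq, hu.natDegree_eq] at this
    linarith
  · obtain ⟨κ, hκ, e⟩ := hq.addSub_comp hu h hP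
    obtain ⟨ν, hν, eq_q⟩ := hq.exists_smul_eq hP
    rw [← hp, ← sym2_comp] at e
    exact ⟨κ, hκ, sym2_left_injective (eq_q ▸ smul_ne_zero hν (h.apply_ne_zero _)) e⟩

end IsMulPair

lemma isMulPair_mulPoly [IsDomain O] [IsAlgClosed K] [FaithfulSMul O K]
    (h : IsKummerMap (W.map (algebraMap O K)) ξ) (n : ℕ) : IsMulPair ξ n (mulPoly W n) := by
  induction n using Nat.twoStepInduction with
  | zero => exact isMulPair_zero h
  | one => exact isMulPair_one h
  | more n hq hu => exact .of_sym2_eq h hq hu (IsMulPair.sym2_mulPoly_add_two h hq hu)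

lemma sym2_mulPoly [IsDomain O] [IsAlgClosed K] [FaithfulSMul O K]
    (h : IsKummerMap (W.map (algebraMap O K)) ξ) (n : ℕ) :
    sym2 (mulPoly W (n + 2)) (mulPoly W n) =
      addSub (W.map C) (sym2 (mulPoly W (n + 1)) ![X, 1]) :=
  IsMulPair.sym2_mulPoly_add_two h (isMulPair_mulPoly h n) (isMulPair_mulPoly h (n + 1))

namespace IsMulPair

variable {n : ℕ} {p : Fin 2 → O[X]}

lemma apply_nsmul_eq (hp : IsMulPair ξ n p) (h : IsKummerMap (W.map (algebraMap O K)) ξ) {P : G}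
    (hP : P ≠ 0) {c : K} (hc : aeval (ξ P 0) (p 0) = c * aeval (ξ P 0) (p 1)) :
    ξ (n • P) = ![c, 1] := by
  obtain ⟨μ, hμ, e⟩ := hp.exists_smul_eq hP
  have e₀ : aeval (ξ P 0) (p 0) = μ * ξ (n • P) 0 := congrFun e 0
  have e₁ : aeval (ξ P 0) (p 1) = μ * ξ (n • P) 1 := congrFun e 1
  have hc' : ξ (n • P) 0 = c * ξ (n • P) 1 := mul_left_cancel₀ hμ (by
    rw [← e₀, hc, e₁, mul_left_comm])
  have hnP : n • P ≠ 0 := fun h₀ ↦ by simp [h₀, h.map_zero] at hc'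
  rw [h.eq_vec hnP, hc', h.apply_one hnP, mul_one]

lemma exists_nsmul_eq [IsAlgClosed K] (hp : IsMulPair ξ n p)
    (h : IsKummerMap (W.map (algebraMap O K)) ξ) (hn : n ≠ 0) (Q : G) : ∃ P, n • P = Q := by
  by_cases hQ : Q = 0
  · exact ⟨0, by rw [hQ, nsmul_zero]⟩
  have : Nontrivial O := (algebraMap O K).domain_nontrivial
  have hlt : (C (ξ Q 0) * (p 1).map (algebraMap O K)).degree <
      ((p 0).map (algebraMap O K)).degree := by
    apply degree_C_mul_lt
    rw [hp.monic.degree_map]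
    exact degree_map_le.trans_lt hp.degree_lt
  obtain ⟨x, hx⟩ := IsAlgClosed.exists_root
    ((p 0).map (algebraMap O K) - C (ξ Q 0) * (p 1).map (algebraMap O K)) (by
      rw [degree_sub_eq_left_of_degree_lt hlt, hp.monic.degree_map,
        degree_eq_natDegree hp.monic.ne_zero, hp.natDegree_eq]
      exact_mod_cast pow_ne_zero 2 hn)
  obtain ⟨P, hP⟩ := h.exists_eq x
  have hnP : ξ (n • P) = ξ Q := by
    rw [h.eq_vec hQ]
    refine hp.apply_nsmul_eq h (h.ne_zero_of_eq hP) ?_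
    rw [hP]
    simpa [sub_eq_zero, eval_map_algebraMap] using hx
  rcases h.eq_or_eq_neg hnP with hPQ | hPQ
  · exact ⟨P, hPQ⟩
  · exact ⟨-P, by rw [neg_nsmul, hPQ, neg_neg]⟩

end IsMulPair

section Reduction

variable [IsDomain O] [IsAlgClosed K] [FaithfulSMul O K] {k : Type*} [Field k] {φ : O →+* k}

/-- The polynomials `Tₙ` with `x(nP) = Xⁿ / Tₙ(X)` for a point `P` with `x(P) = X` on a cubic with
a node at `x = 0`, namely on `y² = x³ + (b / 4) x²`. -/
noncomputable def nodalPoly {k : Type*} [CommRing k] (b : k) : ℕ → k[X]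
  | 0 => 0
  | 1 => 1
  | n + 2 => 2 * X ^ (n + 1) + (2 * X + C b) * nodalPoly b (n + 1) - X ^ 2 * nodalPoly b n

lemma eval_zero_nodalPoly_succ {k : Type*} [CommRing k] (b : k) (n : ℕ) :
    (nodalPoly b (n + 1)).eval 0 = b ^ n := by
  induction n with
  | zero => simp [nodalPoly]
  | succ n ih => simp [nodalPoly, ih, pow_succ']

lemma sym2_map_mulPoly (h : IsKummerMap (W.map (algebraMap O K)) ξ) (n : ℕ) :
    sym2 (mapRingHom φ ∘ mulPoly W (n + 2)) (mapRingHom φ ∘ mulPoly W n) =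
      addSub ((W.map φ).map C) (sym2 (mapRingHom φ ∘ mulPoly W (n + 1)) ![X, 1]) := by
  have hX : (![X, 1] : Fin 2 → k[X]) = mapRingHom φ ∘ ![X, 1] := by
    ext1 i
    fin_cases i <;> simp
  have hW : (W.map φ).map C = (W.map C).map (mapRingHom φ) := by
    rw [WeierstrassCurve.map_map, WeierstrassCurve.map_map, mapRingHom_comp_C]
  rw [hX, hW, sym2_comp, sym2_comp, addSub_map, sym2_mulPoly h]

lemma map_mulPoly_zero (h : IsKummerMap (W.map (algebraMap O K)) ξ) (h₄ : φ W.b₄ = 0)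
    (h₆ : φ W.b₆ = 0) (h₈ : φ W.b₈ = 0) (n : ℕ) : (mulPoly W n 0).map φ = X ^ n ^ 2 := by
  induction n using Nat.twoStepInduction with
  | zero => simp [mulPoly]
  | one => simp [mulPoly]
  | more n ih₀ ih₁ =>
    have e := congrFun (sym2_map_mulPoly (φ := φ) h n) 0
    simp only [sym2, addSub_apply_zero, Function.comp_apply, coe_mapRingHom, ih₀, ih₁,
      Matrix.cons_val, map_b₄, map_b₆, map_b₈, h₄, h₆, h₈, map_zero, zero_mul, sub_zero] at e
    refine mul_right_cancel₀ (pow_ne_zero _ X_ne_zero) (e.trans ?_)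
    ring

lemma map_mulPoly_one_mul_X_pow (h : IsKummerMap (W.map (algebraMap O K)) ξ)
    (h₄ : φ W.b₄ = 0) (h₆ : φ W.b₆ = 0) (h₈ : φ W.b₈ = 0) (n : ℕ) :
    (mulPoly W n 1).map φ * X ^ n = X ^ n ^ 2 * nodalPoly (φ W.b₂) n := by
  have map_zero := map_mulPoly_zero h h₄ h₆ h₈
  induction n using Nat.twoStepInduction with
  | zero => simp [mulPoly, nodalPoly]
  | one => simp [mulPoly, nodalPoly]
  | more n ih₀ ih₁ =>
    have e := congrFun (sym2_map_mulPoly (φ := φ) h n) 1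
    simp only [sym2, addSub_apply_one, Function.comp_apply, coe_mapRingHom, map_zero,
      Matrix.cons_val, map_b₂, map_b₄, map_b₆, h₄, h₆, _root_.map_zero, zero_mul, add_zero,
      mul_one] at e
    refine mul_right_cancel₀ (pow_ne_zero (n ^ 2) X_ne_zero) ?_
    rw [nodalPoly]
    generalize (mulPoly W (n + 2) 1).map φ = B₂ at *
    generalize (mulPoly W (n + 1) 1).map φ = B₁ at *
    generalize (mulPoly W n 1).map φ = B₀ at *
    linear_combination X ^ (n + 2) * e - X ^ ((n + 2) ^ 2 + 2) * ih₀ +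
      (2 * X + C (φ W.b₂)) * X ^ ((n + 1) ^ 2 + 2) * ih₁

lemma map_mulPoly_one_ne_zero (h : IsKummerMap (W.map (algebraMap O K)) ξ)
    (h₄ : φ W.b₄ = 0) (h₆ : φ W.b₆ = 0) (h₈ : φ W.b₈ = 0) {n : ℕ} (hn : n ≠ 0)
    (h₂ : φ W.b₂ ≠ 0) : (mulPoly W n 1).map φ ≠ 0 := by
  obtain ⟨n, rfl⟩ := Nat.exists_eq_succ_of_ne_zero hn
  intro h₀
  have e := map_mulPoly_one_mul_X_pow h h₄ h₆ h₈ (n + 1)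
  rw [h₀, zero_mul, zero_eq_mul, or_iff_right (pow_ne_zero _ X_ne_zero)] at e
  refine pow_ne_zero n h₂ ?_
  rw [← eval_zero_nodalPoly_succ, e, eval_zero]

lemma map_eval_zero_mulPoly (h : IsKummerMap (W.map (algebraMap O K)) ξ) (h₄ : φ W.b₄ = 0)
    (h₆ : φ W.b₆ = 0) (h₈ : φ W.b₈ = 0) {n : ℕ} (hn : 1 < n) (i : Fin 2) :
    φ ((mulPoly W n i).eval 0) = 0 := by
  suffices hdvd : X ∣ (mulPoly W n i).map φ by
    rwa [X_dvd_iff, coeff_map, coeff_zero_eq_eval_zero] at hdvd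
  fin_cases i
  · rw [Fin.zero_eta, map_mulPoly_zero h h₄ h₆ h₈]
    exact dvd_pow_self X (pow_ne_zero 2 (by lia))
  · rw [Fin.mk_one, ← mul_dvd_mul_iff_right (pow_ne_zero n X_ne_zero), ← pow_succ',
      map_mulPoly_one_mul_X_pow h h₄ h₆ h₈]
    exact dvd_mul_of_dvd_left (pow_dvd_pow X (by nlinarith)) _

end Reduction

end MultiplicationPolynomials

section NodalReduction

open Polynomial IsLocalRing

variable {O K G : Type*} [CommRing O] [Field K] [Algebra O K] [AddCommGroup G]

lemma exists_eq_algebraMap_mul_of_sym2_eq [IsIntegrallyClosed O] [IsFractionRing O K]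
    {f : Fin 3 → O} (hf : IsUnit (f 0)) {r t : Fin 2 → K} {κ : K} (hκ : κ ≠ 0)
    (e : sym2 r t = κ • algebraMap O K ∘ f) : ∃ w : O, t 1 = algebraMap O K w * t 0 := by
  obtain ⟨g, hg⟩ := hf.exists_left_inv
  have hg' : algebraMap O K g * algebraMap O K (f 0) = 1 := by rw [← map_mul, hg, map_one]
  have e₀ : r 0 * t 0 = κ * algebraMap O K (f 0) := congrFun e 0
  have e₁ : r 0 * t 1 + r 1 * t 0 = κ * algebraMap O K (f 1) := congrFun e 1
  have e₂ : r 1 * t 1 = κ * algebraMap O K (f 2) := congrFun e 2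
  have ht : t 0 ≠ 0 := right_ne_zero_of_mul (e₀ ▸ mul_ne_zero hκ (right_ne_zero_of_mul_eq_one hg'))
  have quadratic : (t 1 / t 0) ^ 2 - algebraMap O K (g * f 1) * (t 1 / t 0)
      + algebraMap O K (g * f 2) = 0 := by
    rw [map_mul, map_mul]
    field_simp
    apply mul_left_cancel₀ hκ
    linear_combination -κ * t 1 ^ 2 * hg' +
      algebraMap O K g * (t 0 * t 1 * e₁ - t 1 ^ 2 * e₀ - t 0 ^ 2 * e₂)
  have integral : IsIntegral O (t 1 / t 0) := by
    refine ⟨X ^ 2 + (C (-(g * f 1)) * X + C (g * f 2)), monic_X_pow_add (by compute_degree!), ?_⟩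
    simp only [eval₂_add, eval₂_mul, eval₂_pow, eval₂_X, eval₂_C, eval₂_neg, map_neg]
    linear_combination quadratic
  obtain ⟨w, hw⟩ := IsIntegrallyClosed.isIntegral_iff.1 integral
  exact ⟨w, by rw [hw, div_mul_cancel₀ _ ht]⟩

variable [IsLocalRing O] {W : WeierstrassCurve O} {ξ : G → Fin 2 → K}

lemma isUnit_addSub_zero (h₄ : W.b₄ ∈ maximalIdeal O) (h₆ : W.b₆ ∈ maximalIdeal O)
    (h₈ : W.b₈ ∈ maximalIdeal O) {z : Fin 3 → O} (hz : IsUnit (z 0)) :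
    IsUnit (addSub W z 0) := by
  rw [← residue_eq_zero_iff] at h₄ h₆ h₈
  rw [← residue_ne_zero_iff_isUnit] at hz ⊢
  simpa [addSub_apply_zero, h₄, h₆, h₈] using hz

variable [IsIntegrallyClosed O] [IsFractionRing O K]

lemma exists_eq_algebraMap_mul_sub (h : IsKummerMap (W.map (algebraMap O K)) ξ)
    (h₄ : W.b₄ ∈ maximalIdeal O) (h₆ : W.b₆ ∈ maximalIdeal O) (h₈ : W.b₈ ∈ maximalIdeal O)
    {P Q : G} (hP : ∃ w : O, ξ P 1 = algebraMap O K w * ξ P 0)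
    (hQ : ∃ w : O, ξ Q 1 = algebraMap O K w * ξ Q 0) :
    ∃ w : O, ξ (P - Q) 1 = algebraMap O K w * ξ (P - Q) 0 := by
  have eq_smul {P : G} {w : O} (hw : ξ P 1 = algebraMap O K w * ξ P 0) :
      ξ P = ξ P 0 • algebraMap O K ∘ ![1, w] := by
    ext i
    fin_cases i <;> simp [hw, mul_comm]
  have coord_ne_zero {P : G} {w : O} (hw : ξ P 1 = algebraMap O K w * ξ P 0) : ξ P 0 ≠ 0 :=
    fun h₀ ↦ h.apply_ne_zero P (by rw [eq_smul hw, h₀, zero_smul])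
  obtain ⟨w, hw⟩ := hP
  obtain ⟨w', hw'⟩ := hQ
  obtain ⟨κ, hκ, e⟩ := h.addSub_eq P Q
  rw [eq_smul hw, eq_smul hw', sym2_smul_smul, addSub_smul, sym2_comp, addSub_map,
    ← inv_smul_eq_iff₀ hκ, smul_smul] at e
  refine exists_eq_algebraMap_mul_of_sym2_eq (isUnit_addSub_zero h₄ h₆ h₈ (by simp [sym2])) ?_
    e.symm
  exact mul_ne_zero (inv_ne_zero hκ)
    (pow_ne_zero 2 (mul_ne_zero (coord_ne_zero hw) (coord_ne_zero hw')))

/-- The points `P` with `x(P)⁻¹` integral, the point at infinity included. When the reduction of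
`W` has its only singular point at `x = 0`, these are the points of nonsingular reduction. -/
def nonsingularReduction (h : IsKummerMap (W.map (algebraMap O K)) ξ)
    (h₄ : W.b₄ ∈ maximalIdeal O) (h₆ : W.b₆ ∈ maximalIdeal O) (h₈ : W.b₈ ∈ maximalIdeal O) :
    AddSubgroup G :=
  .ofSub {P | ∃ w : O, ξ P 1 = algebraMap O K w * ξ P 0} ⟨0, 0, by simp [h.map_zero]⟩
    fun P hP Q hQ ↦ by
      rw [← sub_eq_add_neg]
      exact exists_eq_algebraMap_mul_sub h h₄ h₆ h₈ hP hQ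

variable {h : IsKummerMap (W.map (algebraMap O K)) ξ} {h₄ : W.b₄ ∈ maximalIdeal O}
  {h₆ : W.b₆ ∈ maximalIdeal O} {h₈ : W.b₈ ∈ maximalIdeal O}

lemma mem_nonsingularReduction_iff {P : G} {x : K} (hP : ξ P = ![x, 1]) :
    P ∈ nonsingularReduction h h₄ h₆ h₈ ↔ ∃ w : O, 1 = algebraMap O K w * x := by
  change (∃ w : O, ξ P 1 = algebraMap O K w * ξ P 0) ↔ _
  simp [hP]

lemma mem_nonsingularReduction_iff_isUnit {P : G} {x : O} (hP : ξ P = ![algebraMap O K x, 1]) :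
    P ∈ nonsingularReduction h h₄ h₆ h₈ ↔ IsUnit x := by
  simp only [mem_nonsingularReduction_iff hP, isUnit_iff_exists_inv', ← map_mul,
    ← (algebraMap O K).map_one, (IsFractionRing.injective O K).eq_iff, eq_comm (a := (1 : O))]

variable [IsDomain O] [IsAlgClosed K]

lemma exists_isUnit_eval_mulPoly_one (h : IsKummerMap (W.map (algebraMap O K)) ξ)
    (h₂ : IsUnit W.b₂) (h₄ : W.b₄ ∈ maximalIdeal O) (h₆ : W.b₆ ∈ maximalIdeal O)
    (h₈ : W.b₈ ∈ maximalIdeal O) {n : ℕ} (hn : n ≠ 0) :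
    ∃ x : O, IsUnit x ∧ IsUnit ((mulPoly W n 1).eval x) := by
  have : IsAlgClosed (ResidueField O) :=
    (isAbsolutelyIntegrallyClosed_of_isFractionRing O K).isAlgClosed_of_surjective
      residue_surjective
  have : Infinite (ResidueField O) := IsAlgClosed.instInfinite
  have hne : X * (mulPoly W n 1).map (residue O) ≠ 0 := mul_ne_zero X_ne_zero <|
    map_mulPoly_one_ne_zero h ((residue_eq_zero_iff _).2 h₄) ((residue_eq_zero_iff _).2 h₆)
      ((residue_eq_zero_iff _).2 h₈) hn ((residue_ne_zero_iff_isUnit _).2 h₂)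
  obtain ⟨x, hx⟩ : ∃ x, (X * (mulPoly W n 1).map (residue O)).eval x ≠ 0 := by
    contrapose! hne
    exact zero_of_eval_zero _ hne
  obtain ⟨x, rfl⟩ := residue_surjective x
  rw [eval_mul, eval_X, eval_map_apply, mul_ne_zero_iff, residue_ne_zero_iff_isUnit,
    residue_ne_zero_iff_isUnit] at hx
  exact ⟨x, hx⟩

lemma exists_mem_maximalIdeal_isRoot (h : IsKummerMap (W.map (algebraMap O K)) ξ)
    (h₄ : W.b₄ ∈ maximalIdeal O) (h₆ : W.b₆ ∈ maximalIdeal O) (h₈ : W.b₈ ∈ maximalIdeal O)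
    {n : ℕ} (hn : 1 < n) (c : O) :
    ∃ z ∈ maximalIdeal O, (mulPoly W n 0 - C c * mulPoly W n 1).IsRoot z := by
  have hp := isMulPair_mulPoly h n
  refine (isAbsolutelyIntegrallyClosed_of_isFractionRing O K).exists_isRoot_mem
    (hp.monic.sub_of_left (degree_C_mul_lt hp.degree_lt c)) ?_
  have eval_mem (i : Fin 2) : (mulPoly W n i).eval 0 ∈ maximalIdeal O := by
    rw [← residue_eq_zero_iff] at h₄ h₆ h₈ ⊢
    exact map_eval_zero_mulPoly h h₄ h₆ h₈ hn i
  rw [eval_sub, eval_mul, eval_C]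
  exact sub_mem (eval_mem 0) (Ideal.mul_mem_left _ c (eval_mem 1))

lemma exists_notMem_nonsingularReduction_nsmul_eq_zero (h₂ : IsUnit W.b₂) {n : ℕ} (hn : 1 < n) :
    ∃ P ∉ nonsingularReduction h h₄ h₆ h₈, n • P = 0 := by
  have hp := isMulPair_mulPoly h n
  obtain ⟨x, hx, hBx⟩ := exists_isUnit_eval_mulPoly_one h h₂ h₄ h₆ h₈ (n := n) (by lia)
  obtain ⟨c, hc⟩ := hBx.dvd (a := (mulPoly W n 0).eval x)
  obtain ⟨z, hz, hroot⟩ := exists_mem_maximalIdeal_isRoot h h₄ h₆ h₈ hn c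
  have hcz : (mulPoly W n 0).eval z = (mulPoly W n 1).eval z * c := by
    rw [IsRoot.def, eval_sub, eval_mul, eval_C] at hroot
    linear_combination hroot
  have nsmul_eq {P : G} {x : O} (hP : ξ P = ![algebraMap O K x, 1])
      (hc : (mulPoly W n 0).eval x = (mulPoly W n 1).eval x * c) :
      ξ (n • P) = ![algebraMap O K c, 1] := by
    refine hp.apply_nsmul_eq h (h.ne_zero_of_eq hP) ?_
    simp [hP, aeval_algebraMap_apply, hc, mul_comm]
  obtain ⟨P, hP⟩ := h.exists_eq (algebraMap O K z)
  obtain ⟨Q, hQ⟩ := h.exists_eq (algebraMap O K x)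
  have hPS : P ∉ nonsingularReduction h h₄ h₆ h₈ :=
    (mem_nonsingularReduction_iff_isUnit hP).not.2 ((mem_maximalIdeal z).1 hz)
  have hQS : Q ∈ nonsingularReduction h h₄ h₆ h₈ := (mem_nonsingularReduction_iff_isUnit hQ).2 hx
  rcases h.eq_or_eq_neg ((nsmul_eq hP hcz).trans (nsmul_eq hQ hc).symm) with hPQ | hPQ
  · exact ⟨P - Q, fun hS ↦ hPS (by simpa using add_mem hS hQS), by rw [nsmul_sub, hPQ, sub_self]⟩
  · refine ⟨P + Q, fun hS ↦ hPS (by simpa using sub_mem hS hQS), ?_⟩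
    rw [nsmul_add, hPQ, neg_add_cancel]

lemma exists_notMem_nonsingularReduction_addOrderOf_eq (h₂ : IsUnit W.b₂) {n : ℕ} (hn : 1 < n) :
    ∃ P ∉ nonsingularReduction h h₄ h₆ h₈, addOrderOf P = n :=
  exists_notMem_addOrderOf_eq _
    (fun p hp ↦ (isMulPair_mulPoly h p).exists_nsmul_eq h hp.ne_zero)
    (fun _ hp ↦ exists_notMem_nonsingularReduction_nsmul_eq_zero h₂ hp.one_lt) hn

end NodalReduction

section SingularPoint

open Polynomial IsLocalRing

/-- The reduction of `(x₀, y₀)` modulo `I` is a singular point of the reduction of `W`: the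
Weierstrass polynomial and both its partial derivatives vanish there. -/
structure IsSingularMod {R : Type*} [CommRing R] (W : WeierstrassCurve R) (I : Ideal R)
    (x₀ y₀ : R) : Prop where
  polynomial_mem : y₀ ^ 2 + W.a₁ * x₀ * y₀ + W.a₃ * y₀
    - x₀ ^ 3 - W.a₂ * x₀ ^ 2 - W.a₄ * x₀ - W.a₆ ∈ I
  polynomialX_mem : W.a₁ * y₀ - 3 * x₀ ^ 2 - 2 * W.a₂ * x₀ - W.a₄ ∈ I
  polynomialY_mem : 2 * y₀ + W.a₁ * x₀ + W.a₃ ∈ I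

namespace IsSingularMod

section CommRing

variable {R : Type*} [CommRing R] {W : WeierstrassCurve R} {I : Ideal R} {x₀ y₀ : R}

lemma variableChange (h : IsSingularMod W I x₀ y₀) :
    IsSingularMod (VariableChange.mk 1 x₀ 0 y₀ • W) I 0 0 where
  polynomial_mem := by
    convert h.polynomial_mem using 1
    simp only [variableChange_a₆, inv_one, Units.val_one]
    ring
  polynomialX_mem := by
    convert h.polynomialX_mem using 1
    simp only [variableChange_a₄, inv_one, Units.val_one]
    ring
  polynomialY_mem := by
    convert h.polynomialY_mem using 1
    simp only [variableChange_a₃, inv_one, Units.val_one]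
    ring

lemma a₃_mem (h : IsSingularMod W I 0 0) : W.a₃ ∈ I := by
  simpa using h.polynomialY_mem

lemma a₄_mem (h : IsSingularMod W I 0 0) : W.a₄ ∈ I := by
  simpa using h.polynomialX_mem

lemma a₆_mem (h : IsSingularMod W I 0 0) : W.a₆ ∈ I := by
  simpa using h.polynomial_mem

lemma b₄_mem (h : IsSingularMod W I 0 0) : W.b₄ ∈ I :=
  add_mem (I.mul_mem_left 2 h.a₄_mem) (I.mul_mem_left W.a₁ h.a₃_mem)

lemma b₆_mem (h : IsSingularMod W I 0 0) : W.b₆ ∈ I :=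
  add_mem (I.pow_mem_of_mem h.a₃_mem 2 two_pos) (I.mul_mem_left 4 h.a₆_mem)

lemma b₈_mem (h : IsSingularMod W I 0 0) : W.b₈ ∈ I := by
  have expand : W.b₈ = (W.a₁ ^ 2 + 4 * W.a₂) * W.a₆ + (W.a₂ * W.a₃ - W.a₁ * W.a₄) * W.a₃
      - W.a₄ * W.a₄ := by
    rw [b₈]
    ring
  rw [expand]
  exact sub_mem (add_mem (I.mul_mem_left _ h.a₆_mem) (I.mul_mem_left _ h.a₃_mem))
    (I.mul_mem_left _ h.a₄_mem)

lemma sub_mem_of_equation [I.IsPrime] (h : IsSingularMod W I x₀ y₀) {x y : R}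
    (hxy : W.toAffine.Equation x y) (hx : x - x₀ ∈ I) : y - y₀ ∈ I := by
  refine ‹I.IsPrime›.mem_of_pow_mem 2 ?_
  rw [Affine.equation_iff] at hxy
  have taylor : (y - y₀) ^ 2 =
      (x ^ 2 + x * x₀ + x₀ ^ 2 + W.a₂ * (x + x₀) + W.a₄ - W.a₁ * y) * (x - x₀)
        - (y₀ ^ 2 + W.a₁ * x₀ * y₀ + W.a₃ * y₀
          - x₀ ^ 3 - W.a₂ * x₀ ^ 2 - W.a₄ * x₀ - W.a₆)
        - (y - y₀) * (2 * y₀ + W.a₁ * x₀ + W.a₃) := by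
    linear_combination hxy
  rw [taylor]
  exact sub_mem (sub_mem (I.mul_mem_left _ hx) h.polynomial_mem)
    (I.mul_mem_left _ h.polynomialY_mem)

end CommRing

lemma isUnit_b₂ {O : Type*} [CommRing O] [IsLocalRing O] {W : WeierstrassCurve O}
    (h : IsSingularMod W (maximalIdeal O) 0 0) (hc₄ : IsUnit W.c₄) : IsUnit W.b₂ := by
  have hb₄ := (residue_eq_zero_iff _).2 h.b₄_mem
  rw [← residue_ne_zero_iff_isUnit] at hc₄ ⊢
  intro hb₂
  simp [c₄, hb₂, hb₄] at hc₄

end IsSingularMod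

variable {O K : Type*} [CommRing O] [Field K] [Algebra O K] [IsFractionRing O K]

lemma exists_eq_algebraMap_of_equation [IsIntegrallyClosed O] {W : WeierstrassCurve O} {x : O}
    {y : K} (h : (W.map (algebraMap O K)).toAffine.Equation (algebraMap O K x) y) :
    ∃ y' : O, algebraMap O K y' = y := by
  refine IsIntegrallyClosed.isIntegral_iff.1 ⟨X ^ 2 + (C (W.a₁ * x + W.a₃) * X -
    C (x ^ 3 + W.a₂ * x ^ 2 + W.a₄ * x + W.a₆)), monic_X_pow_add (by compute_degree!), ?_⟩
  rw [Affine.equation_iff] at h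
  simp only [map_a₁, map_a₂, map_a₃, map_a₄, map_a₆] at h
  simp only [eval₂_add, eval₂_sub, eval₂_mul, eval₂_pow, eval₂_X, eval₂_C, map_add, map_mul,
    map_pow]
  linear_combination h

variable [IsDomain O]

lemma exists_mem_maximalIdeal_eq_algebraMap [ValuationRing O] {x : K}
    (hx : ¬∃ w : O, 1 = algebraMap O K w * x) : ∃ z ∈ maximalIdeal O, algebraMap O K z = x := by
  by_cases hx₀ : x = 0
  · exact ⟨0, zero_mem _, by rw [hx₀, map_zero]⟩
  obtain ⟨z, hz⟩ := (ValuationRing.isInteger_or_isInteger O x).resolve_right fun ⟨w, hw⟩ ↦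
    hx ⟨w, by rw [hw, inv_mul_cancel₀ hx₀]⟩
  refine ⟨z, fun hunit ↦ ?_, hz⟩
  obtain ⟨w, hw⟩ := hunit.exists_left_inv
  exact hx ⟨w, by rw [← hz, ← map_mul, hw, map_one]⟩

open scoped Classical in
theorem exists_addOrderOf_eq_of_isSingularMod [IsAlgClosed K] [ValuationRing O]
    {W : WeierstrassCurve O} (hΔ : W.Δ ≠ 0) (hc₄ : IsUnit W.c₄) {x₀ y₀ : O}
    (hsing : IsSingularMod W (maximalIdeal O) x₀ y₀) {n : ℕ} (hn : 1 < n) :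
    ∃ (x y : O) (h : (W.map (algebraMap O K)).toAffine.Nonsingular (algebraMap O K x)
      (algebraMap O K y)), addOrderOf (Affine.Point.some _ _ h) = n ∧
      x - x₀ ∈ maximalIdeal O ∧ y - y₀ ∈ maximalIdeal O := by
  have hΔK : (W.map (algebraMap O K)).Δ ≠ 0 := by
    rwa [map_Δ, map_ne_zero_iff _ (IsFractionRing.injective O K)]
  let τ : VariableChange O := ⟨1, x₀, 0, y₀⟩
  have hsing' : IsSingularMod (τ • W) (maximalIdeal O) 0 0 := hsing.variableChange
  have hb₂ : IsUnit (τ • W).b₂ := hsing'.isUnit_b₂ (by simpa [τ, variableChange_c₄] using hc₄)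
  have hξ := (isKummerMap_xRep hΔK).variableChange (τ.map (algebraMap O K)) (by simp [τ])
  rw [map_variableChange] at hξ
  obtain ⟨P, hPS, hPn⟩ := exists_notMem_nonsingularReduction_addOrderOf_eq (h := hξ)
    (h₄ := hsing'.b₄_mem) (h₆ := hsing'.b₆_mem) (h₈ := hsing'.b₈_mem) hb₂ hn
  rcases P with _ | ⟨x, y, hP⟩
  · exact absurd (zero_mem _) hPS
  rw [mem_nonsingularReduction_iff (x := x - algebraMap O K x₀) (by simp [τ])] at hPS
  obtain ⟨z, hz, hzx⟩ := exists_mem_maximalIdeal_eq_algebraMap hPS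
  obtain rfl : algebraMap O K (z + x₀) = x := by rw [map_add, hzx, sub_add_cancel]
  obtain ⟨y, rfl⟩ := exists_eq_algebraMap_of_equation hP.1
  have hz₀ : z + x₀ - x₀ ∈ maximalIdeal O := by rwa [add_sub_cancel_right]
  have hxy := (Affine.map_equation W.toAffine (IsFractionRing.injective O K) _ _).1 hP.1
  exact ⟨z + x₀, y, hP, hPn, hz₀, hsing.sub_mem_of_equation hxy hz₀⟩

end SingularPoint

section Valuation

open IsLocalRing

variable {K Γ : Type*} [Field K] [LinearOrderedAddCommGroupWithTop Γ] (v : AddValuation K Γ)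

lemma mem_maximalIdeal_valuationSubring_iff {a : K} (ha : a ∈ v.toValuation.valuationSubring) :
    ⟨a, ha⟩ ∈ maximalIdeal v.toValuation.valuationSubring ↔ 0 < v a := by
  rw [ValuationSubring.valuation_lt_one_iff]
  exact v.toValuation.isEquiv_valuation_valuationSubring.symm.lt_one_iff_lt_one

lemma isUnit_valuationSubring_iff {a : K} (ha : a ∈ v.toValuation.valuationSubring) :
    IsUnit (⟨a, ha⟩ : v.toValuation.valuationSubring) ↔ v a = 0 := by
  rw [ValuationSubring.valuation_eq_one_iff]
  exact v.toValuation.isEquiv_valuation_valuationSubring.symm.eq_one_iff_eq_one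

end Valuation

open IsLocalRing in
open scoped Classical in
theorem statement18_general {K Γ : Type*} [Field K] [IsAlgClosed K]
    [LinearOrderedAddCommGroupWithTop Γ] (v : AddValuation K Γ)
    (W : WeierstrassCurve K) (hΔ : W.Δ ≠ 0)
    (hint : 0 ≤ v W.a₁ ∧ 0 ≤ v W.a₂ ∧ 0 ≤ v W.a₃ ∧ 0 ≤ v W.a₄ ∧ 0 ≤ v W.a₆) (hc₄ : v W.c₄ = 0)
    (x₀ y₀ : K) (hx₀ : 0 ≤ v x₀) (hy₀ : 0 ≤ v y₀)
    (hsing₀ : 0 < v (y₀ ^ 2 + W.a₁ * x₀ * y₀ + W.a₃ * y₀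
      - x₀ ^ 3 - W.a₂ * x₀ ^ 2 - W.a₄ * x₀ - W.a₆))
    (hsingX : 0 < v (W.a₁ * y₀ - 3 * x₀ ^ 2 - 2 * W.a₂ * x₀ - W.a₄))
    (hsingY : 0 < v (2 * y₀ + W.a₁ * x₀ + W.a₃))
    (n : ℕ) (hn : 1 < n) :
    ∃ (x y : K) (h : W.toAffine.Nonsingular x y),
      addOrderOf (Affine.Point.some x y h) = n ∧
      0 ≤ v x ∧ 0 ≤ v y ∧ 0 < v (x - x₀) ∧ 0 < v (y - y₀) := by
  obtain ⟨ha₁, ha₂, ha₃, ha₄, ha₆⟩ := hint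
  let O := v.toValuation.valuationSubring
  let W' : WeierstrassCurve O :=
    ⟨⟨W.a₁, ha₁⟩, ⟨W.a₂, ha₂⟩, ⟨W.a₃, ha₃⟩, ⟨W.a₄, ha₄⟩, ⟨W.a₆, ha₆⟩⟩
  have hΔ' : W'.Δ ≠ 0 := fun h ↦ hΔ (congrArg (algebraMap O K) h)
  have hc₄' : IsUnit W'.c₄ := (isUnit_valuationSubring_iff v _).2 hc₄
  have hsing : IsSingularMod W' (maximalIdeal O) ⟨x₀, hx₀⟩ ⟨y₀, hy₀⟩ :=
    ⟨(mem_maximalIdeal_valuationSubring_iff v _).2 hsing₀,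
      (mem_maximalIdeal_valuationSubring_iff v _).2 hsingX,
      (mem_maximalIdeal_valuationSubring_iff v _).2 hsingY⟩
  obtain ⟨x, y, hxy, hord, hx, hy⟩ :=
    exists_addOrderOf_eq_of_isSingularMod (K := K) hΔ' hc₄' hsing hn
  exact ⟨x, y, hxy, hord, x.2, y.2, (mem_maximalIdeal_valuationSubring_iff v _).1 hx,
    (mem_maximalIdeal_valuationSubring_iff v _).1 hy⟩

open scoped Classical in
/-- Let `K` be an algebraically closed field with a nontrivial
non-archimedean valuation `v` whose residue field has characteristic ≠ 2, 3.  Let `E` be an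
elliptic curve over `K` with a minimal integral Weierstrass model `W` having multiplicative
reduction (`v Δ > 0`, `v c₄ = 0`), and let `(x₀, y₀)` (given here by a lift to the valuation
ring) be the singular point of the reduced curve over the residue field, i.e. the reduced
Weierstrass polynomial and both its partial derivatives vanish at the reduction of `(x₀, y₀)`.
Let `n > 1` be an integer not divisible by the residue characteristic (`v n = 0`).  Then there
is a point `P = (x, y) ∈ E(K)` of order `n` with `x, y` in the valuation ring which reduces
to the singular point `(x₀, y₀)` of the reduced curve. -/
theorem statement18 {K : Type*} [Field K] [IsAlgClosed K] (v : AddValuation K (WithTop ℝ))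
    (hv : ∃ x : K, x ≠ 0 ∧ v x ≠ 0) (hv2 : v (2 : K) = 0) (hv3 : v (3 : K) = 0)
    (W : WeierstrassCurve K) (hΔ : W.Δ ≠ 0) (hint : IsIntegralModel v W)
    (hmin : IsMinimalModel v W W) (hΔpos : 0 < v W.Δ) (hc₄ : v W.c₄ = 0)
    (x₀ y₀ : K) (hx₀ : 0 ≤ v x₀) (hy₀ : 0 ≤ v y₀)
    (hsing₀ : 0 < v (y₀ ^ 2 + W.a₁ * x₀ * y₀ + W.a₃ * y₀
      - x₀ ^ 3 - W.a₂ * x₀ ^ 2 - W.a₄ * x₀ - W.a₆))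
    (hsingX : 0 < v (W.a₁ * y₀ - 3 * x₀ ^ 2 - 2 * W.a₂ * x₀ - W.a₄))
    (hsingY : 0 < v (2 * y₀ + W.a₁ * x₀ + W.a₃))
    (n : ℕ) (hn : 1 < n) (hvn : v (n : K) = 0) :
    ∃ (x y : K) (h : W.toAffine.Nonsingular x y),
      addOrderOf (Affine.Point.some x y h) = n ∧
      0 ≤ v x ∧ 0 ≤ v y ∧ 0 < v (x - x₀) ∧ 0 < v (y - y₀) := by
  exact statement18_general v W hΔ hint hc₄ x₀ y₀ hx₀ hy₀ hsing₀ hsingX hsingY n hn
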